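/- Let (A,m) be a curved A∞-algebra and let b ∈ A^1 be an element with the partial unital property (m_k vanishes whenever b is one of its inputs, for all k ≥ 3) such that m_2(b,b) = 0 and m_0(1) + m_1(b) ∈ Z(m_2). Then b is a solution of the obstruction equation: m(e^b m(e^b) e^b x e^b) = (−1)^{|x|} m(e^b x e^b m(e^b) e^b) for all homogeneous x ∈ A. -/

import Mathlib

open scoped BigOperators

/-- A graded operation `A^{⊗n} → A` of internal degree `d` with respect to a grading `𝒜`
of `A`: an `n`-multilinear map sending tuples that are homogeneous of degrees `dg i`
into the homogeneous piece of degree `(∑ i, dg i) + d`.  This is an element of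
`C^{n,d}(A,A) = Hom^d(A^{⊗n}, A)`. -/
structure GradedOp (F : Type*) [Field F] (A : Type*) [AddCommGroup A] [Module F A]
    (𝒜 : ℤ → Submodule F A) (n : ℕ) (d : ℤ) where
  toFun : MultilinearMap F (fun _ : Fin n => A) A
  map_graded : ∀ (dg : Fin n → ℤ) (x : Fin n → A), (∀ i, x i ∈ 𝒜 (dg i)) →
    toFun x ∈ 𝒜 ((∑ i, dg i) + d)

namespace Ainf

variable {F : Type*} [Field F] {A : Type*} [AddCommGroup A] [Module F A]

/-- Indexing into a tuple, with junk value `0` out of range. -/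
def get {N : ℕ} (x : Fin N → A) (p : ℕ) : A := if h : p < N then x ⟨p, h⟩ else 0

/-- The block `x_{r+1}, …, x_{r+s}` of a tuple. -/
def blockFun {N : ℕ} (x : Fin N → A) (r s : ℕ) : Fin s → A := fun i => get x (r + (i : ℕ))

/-- The tuple `x_1, …, x_r, a, x_{r+s+1}, …, x_N` obtained from `x` by replacing the block
of length `s` starting at position `r` by the single entry `a`; the intended arity is
`u = r + 1 + (N - (r + s))`. -/
def splice {N : ℕ} (x : Fin N → A) (r s : ℕ) (a : A) {u : ℕ} : Fin u → A :=
  fun j => if (j : ℕ) < r then get x j else if (j : ℕ) = r then a else get x ((j : ℕ) + s - 1)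

/-- Sum of the degrees of the entries before position `i`. -/
def degSum {N : ℕ} (dg : Fin N → ℤ) (i : ℕ) : ℤ :=
  ∑ j : Fin N, if (j : ℕ) < i then dg j else 0

/-- The sign `(-1)^e`. -/
def sgn (F : Type*) [Field F] (e : ℤ) : F := (-1 : F) ^ e

/-- The construction equations of a curved A∞-algebra: for all `n ≥ 0` and all
homogeneous `x_1, …, x_n`,
`∑_{n=r+s+t} (-1)^{δ(x_1,…,x_r)} m_{r+1+t}(x_1, …, x_r, m_s(x_{r+1},…,x_{r+s}), …, x_n) = 0`,
where `δ(x_1, …, x_r) = ∑_{i=1}^r (|x_i| - 1)` and `s = 0` terms insert the curvature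
`m_0(1)`. -/
def CurvedEqns (𝒜 : ℤ → Submodule F A) (m : ∀ n : ℕ, GradedOp F A 𝒜 n (2 - (n : ℤ))) :
    Prop :=
  ∀ (n : ℕ) (dg : Fin n → ℤ) (x : Fin n → A), (∀ i, x i ∈ 𝒜 (dg i)) →
    (∑ r : Fin (n + 1), ∑ s : Fin (n + 1 - (r : ℕ)),
      sgn F (degSum dg (r : ℕ) - (r : ℕ)) •
        (m ((r : ℕ) + 1 + (n - ((r : ℕ) + (s : ℕ))))).toFun
          (splice x (r : ℕ) (s : ℕ) ((m (s : ℕ)).toFun (blockFun x (r : ℕ) (s : ℕ))))) = 0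

/-- A curved A∞-algebra structure on the `ℤ`-graded vector space `A = ⊕ₖ 𝒜 k`:
graded maps `mₙ : A^{⊗n} → A` of degree `2 - n` for `n ≥ 0` (with curvature
`m_0(1) ∈ A^2`) satisfying the construction equations; for simplicity `m_k = 0` for
`k ≫ 1` (all `k ≥ bound`). -/
structure CurvedAinf (F : Type*) [Field F] (A : Type*) [AddCommGroup A] [Module F A]
    (𝒜 : ℤ → Submodule F A) where
  isInternal : DirectSum.IsInternal 𝒜
  m : ∀ n : ℕ, GradedOp F A 𝒜 n (2 - (n : ℤ))
  bound : ℕ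
  m_bound : ∀ k, bound ≤ k → ∀ x, (m k).toFun x = 0
  curved : CurvedEqns 𝒜 m

/-- The expression `m(e^b x_1 e^b x_2 e^b ⋯ e^b x_n e^b)`: the sum over all `l ≥ n` and
all ways of inserting `l - n` copies of `b` between (and around) the ordered inputs
`x_1, …, x_n` of the values `m_l(b,…,b,x_1,b,…,b,x_2,…,b,x_n,b,…,b)`.  For `n = 0`
this is `m(e^b) = ∑_{k ≥ 0} m_k(b,…,b)`.  (The insertion patterns of the `x_i` into
`l` slots are parametrized by the `n`-element subsets `s` of `Fin l`, the `x_i`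
occupying the positions of `s` in increasing order.) -/
noncomputable def mDef (M : CurvedAinf F A 𝒜) (b : A) {n : ℕ} (x : Fin n → A) : A :=
  ∑ᶠ l : ℕ, ∑ s : Finset (Fin l),
    if h : s.card = n then
      (M.m l).toFun (fun j => if hj : j ∈ s then x ((s.orderIsoOfFin h).symm ⟨j, hj⟩) else b)
    else 0

/-- The sum of the parts of a composition before the `j`-th part. -/
def offsetSum {k : ℕ} (c : Fin k → ℕ) (j : Fin k) : ℕ :=
  ∑ j' : Fin k, if j' < j then c j' else 0

/-- The defining equations of a homomorphism of curved A∞-algebras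
`f : (A, m^{M1}) → (A, m^{M2})`, a family of graded maps `f_n : A^{⊗n} → A` of degree
`1 - n` (`n ≥ 0`): for all `n ≥ 0` and homogeneous `x_1, …, x_n`,
`∑_{n=r+s+t} (-1)^{δ(x_1,…,x_r)} f_{r+1+t}(x_1,…,x_r, m^{M1}_s(…), …, x_n)
  = ∑_{n=i_1+⋯+i_k} m^{M2}_k (f_{i_1}(x_1,…), …, f_{i_k}(…,x_n))`,
the right-hand compositions `(i_1, …, i_k)` of `n` into `k` parts `≥ 0` being
parametrized by `Finset.Nat.antidiagonalTuple k n`. -/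
def CurvedHomEqns (𝒜 : ℤ → Submodule F A) (M1 M2 : CurvedAinf F A 𝒜)
    (f : ∀ n : ℕ, GradedOp F A 𝒜 n (1 - (n : ℤ))) : Prop :=
  ∀ (n : ℕ) (dg : Fin n → ℤ) (x : Fin n → A), (∀ i, x i ∈ 𝒜 (dg i)) →
    (∑ r : Fin (n + 1), ∑ s : Fin (n + 1 - (r : ℕ)),
      sgn F (degSum dg (r : ℕ) - (r : ℕ)) •
        (f ((r : ℕ) + 1 + (n - ((r : ℕ) + (s : ℕ))))).toFun
          (splice x (r : ℕ) (s : ℕ) ((M1.m (s : ℕ)).toFun (blockFun x (r : ℕ) (s : ℕ)))))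
    = ∑ᶠ k : ℕ, ∑ c ∈ Finset.Nat.antidiagonalTuple k n,
        (M2.m k).toFun (fun j => (f (c j)).toFun (fun i => get x (offsetSum c j + (i : ℕ))))

end Ainf
namespace Ainf

theorem mDef_two {F : Type*} [Field F] {A : Type*} [AddCommGroup A] [Module F A]
    {𝒜 : ℤ → Submodule F A} (M : CurvedAinf F A 𝒜) (b : A)
    (hpartial : ∀ (k : ℕ), 3 ≤ k → ∀ (i : Fin k) (x : Fin k → A), x i = b →
      (M.m k).toFun x = 0) (x : Fin 2 → A) :
    mDef M b x = (M.m 2).toFun x := by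
  unfold mDef
  rw [finsum_eq_single _ 2]
  · rw [Finset.sum_eq_single Finset.univ]
    · rw [dif_pos (by simp)]
      congr 1
      funext j
      rw [dif_pos (Finset.mem_univ j)]
      congr 1
      rw [OrderIso.symm_apply_eq]
      apply Subtype.ext
      rw [Finset.coe_orderIsoOfFin_apply]
      have h := Finset.orderEmbOfFin_unique (s := (Finset.univ : Finset (Fin 2))) (k := 2)
        (by simp) (f := id) (fun _ => Finset.mem_univ _) strictMono_id
      exact congrFun h j
    · intro s _ hs
      rw [dif_neg]
      intro h
      exact hs ((Finset.card_eq_iff_eq_univ s).1 (by simpa using h))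
    · intro h
      exact absurd (Finset.mem_univ _) h
  · intro l hl
    apply Finset.sum_eq_zero
    intro s _
    split_ifs with h
    · have hle : s.card ≤ l := by simpa using Finset.card_le_univ s
      have h3 : 3 ≤ l := by omega
      obtain ⟨j, hj⟩ : ∃ j, j ∉ s := by
        by_contra! hc
        have hu : s = Finset.univ := Finset.eq_univ_iff_forall.2 hc
        rw [hu] at h
        simp at h
        omega
      exact hpartial l h3 j _ (by simp [hj])
    · rfl

theorem mDef_zero {F : Type*} [Field F] {A : Type*} [AddCommGroup A] [Module F A]
    {𝒜 : ℤ → Submodule F A} (M : CurvedAinf F A 𝒜) (b : A)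
    (hpartial : ∀ (k : ℕ), 3 ≤ k → ∀ (i : Fin k) (x : Fin k → A), x i = b →
      (M.m k).toFun x = 0) (hbb : (M.m 2).toFun ![b, b] = 0) (x : Fin 0 → A) :
    mDef M b x = (M.m 0).toFun (fun i => i.elim0) + (M.m 1).toFun (fun _ => b) := by
  have key : ∀ l : ℕ, (∑ s : Finset (Fin l), if h : s.card = 0 then
      (M.m l).toFun (fun j => if hj : j ∈ s then x ((s.orderIsoOfFin h).symm ⟨j, hj⟩) else b)
      else 0) = (M.m l).toFun (fun _ => b) := by
    intro l
    rw [Finset.sum_eq_single ∅]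
    · rw [dif_pos (by simp)]
      simp
    · intro s _ hs
      rw [dif_neg]
      simpa using hs
    · intro h
      exact absurd (Finset.mem_univ _) h
  unfold mDef
  simp_rw [key]
  rw [finsum_eq_sum_of_support_subset (s := Finset.range 2)]
  · rw [Finset.sum_range_succ, Finset.sum_range_one]
    congr 2
    exact Subsingleton.elim _ _
  · intro l hl
    by_contra hc
    have h2 : 2 ≤ l := by
      simp at hc
      omega
    apply hl
    rcases h2.eq_or_lt with h | h
    · subst h
      rw [← hbb]
      refine congrArg (M.m 2).toFun ?_
      funext j
      fin_cases j <;> rfl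
    · exact hpartial l h ⟨0, by omega⟩ _ rfl

end Ainf

open Ainf in
/-- Let `(A, m)` be a curved A∞-algebra and let `b ∈ A^1` have the
partial unital property (`m_k` vanishes whenever `b` is one of its inputs, for all
`k ≥ 3`) with `m_2(b, b) = 0` and `m_0(1) + m_1(b) ∈ Z(m_2)` (the center of `m_2`:
`m_2(c, x) = (-1)^{|x|} m_2(x, c)` for all homogeneous `x`).  Then `b` solves the
obstruction equation
`m(e^b m(e^b) e^b x e^b) = (-1)^{|x|} m(e^b x e^b m(e^b) e^b)` for all homogeneous
`x ∈ A`. -/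
theorem partial_unital_solves_obstruction {F : Type*} [Field F] {A : Type*}
    [AddCommGroup A] [Module F A] (𝒜 : ℤ → Submodule F A)
    (M : CurvedAinf F A 𝒜) (b : A) (hb : b ∈ 𝒜 1)
    (hpartial : ∀ (k : ℕ), 3 ≤ k → ∀ (i : Fin k) (x : Fin k → A), x i = b →
      (M.m k).toFun x = 0)
    (hbb : (M.m 2).toFun ![b, b] = 0)
    (hcen : ∀ (d : ℤ) (x : A), x ∈ 𝒜 d →
      (M.m 2).toFun ![(M.m 0).toFun (fun i => i.elim0) + (M.m 1).toFun (fun _ => b), x]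
        = sgn F d •
          (M.m 2).toFun ![x, (M.m 0).toFun (fun i => i.elim0) + (M.m 1).toFun (fun _ => b)]) :
    ∀ (d : ℤ) (x : A), x ∈ 𝒜 d →
      mDef M b ![mDef M b (fun i : Fin 0 => i.elim0), x]
        = sgn F d • mDef M b ![x, mDef M b (fun i : Fin 0 => i.elim0)] := by
  intro d x hx
  rw [mDef_zero M b hpartial hbb, mDef_two M b hpartial, mDef_two M b hpartial]
  exact hcen d x hx
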